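/- arXiv:0806.3169 — 4 statements merged into one kernel-verified Lean document; each statement's English description precedes it below -/
import Mathlib

section
/- Let V be a finite-dimensional complex vector space of dimension n, let ω be a skew-symmetric bilinear form on V, and let a : V → V be a linear endomorphism that is ω-self-adjoint, i.e. ω(a u, v) = ω(u, a v) for all u, v ∈ V. Suppose ρ ∈ ℂ is an eigenvalue of a whose geometric multiplicity equals 1, i.e. dim ker(a − ρ·id) = 1. Then every vector v in the generalized eigenspace of a at ρ, i.e. every v with (a − ρ·id)ⁿ v = 0, satisfies ω(v, w) = 0 for all w ∈ V. -/
/-!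
Put `N = a - ρ`, which is again `ω`-self-adjoint, and let `v` be a nonzero vector of `ker (N ^ k)`.
By Fitting's lemma `v` is not in every `range (N ^ j)`, so `v = N ^ j u` for some `u ∉ range N`;
as `ker N` is a line, `range N` and `u` span the space. Now `ω(v, u) = ω(N ^ j u, u)` vanishes
because `N ^ j` is self-adjoint and `ω` is skew, while `ω(v, N x) = ω(N v, x)` vanishes by induction
on `k`.
-/

open LinearMap (ker range)

section Chains

variable {R M : Type*} [Ring R] [AddCommGroup M] [Module R M] [IsNoetherian R M]

theorem exists_notMem_range_pow {N : Module.End R M} {k : ℕ} {v : M} (hv : (N ^ k) v = 0)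
    (hv₀ : v ≠ 0) : ∃ n, v ∉ range (N ^ n) := by
  obtain ⟨n, hdisj, hkn⟩ :=
    (N.eventually_disjoint_ker_pow_range_pow.and (Filter.eventually_ge_atTop k)).exists
  have hker : v ∈ ker (N ^ n) := Module.End.pow_map_zero_of_le hkn hv
  exact ⟨n, fun hrange ↦ hv₀ (Submodule.disjoint_def.mp hdisj v hker hrange)⟩

theorem exists_notMem_range_and_pow_apply_eq {N : Module.End R M} {k : ℕ} {v : M}
    (hv : (N ^ k) v = 0) (hv₀ : v ≠ 0) : ∃ u ∉ range N, ∃ j, (N ^ j) u = v := by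
  have hzero : ¬ v ∉ range (N ^ 0) := not_not.mpr ⟨v, rfl⟩
  obtain ⟨j, hj, hsucc⟩ :=
    Nat.exists_not_and_succ_of_not_zero_of_exists hzero (exists_notMem_range_pow hv hv₀)
  obtain ⟨u, hu⟩ := not_not.mp hj
  refine ⟨u, ?_, j, hu⟩
  rintro ⟨x, rfl⟩
  exact hsucc ⟨x, by rw [pow_succ, Module.End.mul_apply, hu]⟩

end Chains

theorem eq_top_of_range_lt {K V : Type*} [DivisionRing K] [AddCommGroup V] [Module K V]
    [FiniteDimensional K V] {N : Module.End K V} (hN : Module.finrank K (ker N) ≤ 1)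
    {S : Submodule K V} (hS : range N < S) : S = ⊤ := by
  have hlt : Module.finrank K (range N) < Module.finrank K S :=
    Submodule.finrank_lt_finrank_of_lt hS
  have hrank : Module.finrank K (range N) + Module.finrank K (ker N) = Module.finrank K V :=
    N.finrank_range_add_finrank_ker
  exact Submodule.eq_top_of_finrank_eq (by have := S.finrank_le; omega)

theorem isSelfAdjoint_pow {R M P : Type*} [CommSemiring R] [AddCommMonoid M] [Module R M]
    [AddCommMonoid P] [Module R P] {B : M →ₗ[R] M →ₗ[R] P} {f : Module.End R M}
    (hf : B.IsSelfAdjoint f) (n : ℕ) : B.IsSelfAdjoint (f ^ n : Module.End R M) := by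
  induction n with
  | zero => exact LinearMap.isAdjointPair_one
  | succ n ih =>
    have hmul : B.IsAdjointPair B (f ^ n * f) (f * f ^ n) := ih.mul hf
    rwa [← pow_succ, ← pow_succ'] at hmul

theorem apply_apply_self_eq_zero_of_skew {R M P : Type*} [CommRing R] [IsDomain R]
    [NeZero (2 : R)] [AddCommGroup M] [Module R M] [AddCommGroup P] [Module R P]
    [Module.IsTorsionFree R P] {B : M →ₗ[R] M →ₗ[R] P} (hB : ∀ u v, B u v = -B v u) {f : M → M}
    (hf : B.IsSelfAdjoint f) (u : M) : B (f u) u = 0 := by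
  have hneg : B (f u) u = -B (f u) u := (hf u u).trans (hB u (f u))
  have htwo : (2 : R) • B (f u) u = 0 := by rw [two_smul, ← eq_neg_iff_add_eq_zero, ← hneg]
  exact (smul_eq_zero.mp htwo).resolve_left two_ne_zero

section SelfAdjoint

variable {K V W : Type*} [Field K] [NeZero (2 : K)] [AddCommGroup V] [Module K V]
  [FiniteDimensional K V] [AddCommGroup W] [Module K W] {ω : V →ₗ[K] V →ₗ[K] W}

theorem ker_pow_le_ker_of_isSelfAdjoint (hω : ∀ u v, ω u v = -ω v u) {N : Module.End K V}
    (hN : ω.IsSelfAdjoint N) (hker : Module.finrank K (ker N) ≤ 1) (k : ℕ) :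
    ker (N ^ k) ≤ ker ω := by
  induction k with
  | zero => exact (LinearMap.ker_eq_bot_of_injective Function.injective_id).trans_le bot_le
  | succ k ih =>
    intro v (hv : (N ^ (k + 1)) v = 0)
    obtain rfl | hv₀ := eq_or_ne v 0
    · exact zero_mem _
    obtain ⟨u, hu, j, rfl⟩ := exists_notMem_range_and_pow_apply_eq hv hv₀
    set v := (N ^ j) u
    have hωu : u ∈ ker (ω v) := apply_apply_self_eq_zero_of_skew hω (isSelfAdjoint_pow hN j) u
    have hNv : ω (N v) = 0 := ih (by rwa [pow_succ] at hv)
    have hrange : range N ≤ ker (ω v) := by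
      rintro _ ⟨x, rfl⟩
      rw [LinearMap.mem_ker, ← hN v x, hNv, LinearMap.zero_apply]
    have htop : ker (ω v) = ⊤ :=
      eq_top_of_range_lt hker (SetLike.lt_iff_le_and_exists.mpr ⟨hrange, u, hωu, hu⟩)
    exact LinearMap.ker_eq_top.mp htop

theorem stmt_1_general (hω : ∀ u v, ω u v = -ω v u) {a : Module.End K V}
    (ha : ω.IsSelfAdjoint a) {ρ : K} (hρ : Module.finrank K (a.eigenspace ρ) ≤ 1) :
    a.maxGenEigenspace ρ ≤ ker ω := by
  have hN : ω.IsSelfAdjoint (a - ρ • (1 : Module.End K V)) :=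
    ha.sub (LinearMap.isAdjointPair_one.smul ρ)
  intro v hv
  obtain ⟨k, hk⟩ := (a.mem_maxGenEigenspace ρ v).mp hv
  rw [Module.End.eigenspace_def] at hρ
  exact ker_pow_le_ker_of_isSelfAdjoint hω hN hρ k hk

end SelfAdjoint

/-- Lemma 6: if `a` is self-adjoint with respect to a skew-symmetric bilinear form `ω`
on a finite-dimensional complex vector space, and `ρ` is an eigenvalue of `a` with
geometric multiplicity 1, then every vector of the generalized eigenspace of `ρ`
lies in the kernel of `ω`. -/
theorem stmt_1 {V : Type*} [AddCommGroup V] [Module ℂ V] [FiniteDimensional ℂ V]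
    (ω : V →ₗ[ℂ] V →ₗ[ℂ] ℂ) (hskew : ∀ u v, ω u v = - ω v u)
    (a : V →ₗ[ℂ] V) (hsa : ∀ u v, ω (a u) v = ω u (a v))
    (ρ : ℂ)
    (hmult : Module.finrank ℂ (LinearMap.ker (a - ρ • (LinearMap.id : V →ₗ[ℂ] V))) = 1)
    (v : V)
    (hv : ((a - ρ • (LinearMap.id : V →ₗ[ℂ] V)) ^ (Module.finrank ℂ V)) v = 0) :
    ∀ w, ω v w = 0 := by
  rw [← Module.End.one_eq_id, ← Module.End.eigenspace_def] at hmult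
  exact LinearMap.congr_fun <|
    stmt_1_general hskew hsa hmult.le ((Module.End.mem_maxGenEigenspace a ρ v).mpr ⟨_, hv⟩)
end

section
/- Let V be a finite-dimensional real vector space of dimension n ≥ 1, let g be a nondegenerate symmetric bilinear form on V, let a : V → V be a g-self-adjoint endomorphism (g(a u, w) = g(u, a w) for all u, w), and let Z : V × V × V × V → ℝ be a multilinear map that is skew-symmetric in its first two arguments and satisfies Z(a u, v, x, y) + Z(a v, u, x, y) = 0 for all u, v, x, y ∈ V. Suppose the complexification of a has a (possibly complex) eigenvalue ρ whose geometric multiplicity equals 1 (the kernel of a_ℂ − ρ·id in V ⊗ ℂ is one-dimensional). Then there exists a vector v ∈ V with g(v, v) ≠ 0 such that Z(v, x, y, z) = 0 for all x, y, z ∈ V. -/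
/-!
Call `f` self-adjoint for a bilinear map `B` if `B (f u) w = B u (f w)`. If moreover `u` is a cyclic
vector for `f`, then `B (p(f) u) (q(f) u) = B u ((p q)(f) u)` is symmetric in `p` and `q`, so `B` is
symmetric. A nilpotent endomorphism whose kernel is a line has a cyclic vector; hence, if the
eigenvalue `ρ` has geometric multiplicity one, every bilinear map for which `f` is self-adjoint is
symmetric on the generalized eigenspace `U` of `ρ`. If it is also alternating on `U`, it vanishes
on `U`, and then `U` lies in its kernel, because `U` is orthogonal to its Fitting complement.

After extension of scalars this applies twice. The map `Z` is alternating, so `U` is contained in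
the kernel of `Z`. If all vectors in the kernel of `Z` were isotropic for `g`, then `g` would be
alternating on `U`, so `U` would lie in the kernel of `g`, which is zero.
-/

open Module LinearMap Polynomial
open scoped TensorProduct

section CyclicVector

variable {R M P : Type*} [CommSemiring R] [AddCommMonoid M] [Module R M] [AddCommMonoid P]
  [Module R P]

/-- A vector `u` is cyclic for an endomorphism `f` if its images under the polynomials in `f`
exhaust the module. -/
def IsCyclicVector (f : End R M) (u : M) : Prop :=
  ∀ v, ∃ p : R[X], aeval f p u = v

theorem isSelfAdjoint_aeval {B : LinearMap.BilinMap R M P} {f : End R M} (hf : B.IsSelfAdjoint f)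
    (p : R[X]) : B.IsSelfAdjoint (aeval f p) := by
  induction p using Polynomial.induction_on with
  | C c => intro v w; simp
  | add p q hp hq => intro v w; simp [hp v w, hq v w]
  | monomial n c ih =>
    intro v w
    calc B (aeval f (C c * X ^ (n + 1)) v) w
        = B (aeval f (C c * X ^ n) (f v)) w := by simp [pow_succ]
      _ = B v (f (aeval f (C c * X ^ n) w)) := by rw [ih, hf]
      _ = B v (aeval f (C c * X ^ (n + 1)) w) := by simp [pow_succ']

theorem IsCyclicVector.bilin_comm {B : LinearMap.BilinMap R M P} {f : End R M} {u : M}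
    (hu : IsCyclicVector f u) (hf : B.IsSelfAdjoint f) (v w : M) : B v w = B w v := by
  obtain ⟨p, rfl⟩ := hu v
  obtain ⟨q, rfl⟩ := hu w
  calc B (aeval f p u) (aeval f q u)
      = B u (aeval f (p * q) u) := by rw [isSelfAdjoint_aeval hf p, map_mul, End.mul_apply]
    _ = B (aeval f q u) (aeval f p u) := by
      rw [isSelfAdjoint_aeval hf q, mul_comm, map_mul, End.mul_apply]

theorem isCyclicVector_of_isNilpotent {f : End R M} (hf : IsNilpotent f) {u : M}
    (hu : ∀ v, ∃ (c : R) (w : M), c • u + f w = v) : IsCyclicVector f u := by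
  intro v
  have approx (n : ℕ) : ∃ (p : R[X]) (w : M), aeval f p u + (f ^ n) w = v := by
    induction n with
    | zero => exact ⟨0, v, by simp⟩
    | succ n ih =>
      obtain ⟨p, w, hw⟩ := ih
      obtain ⟨c, w', rfl⟩ := hu w
      refine ⟨p + C c * X ^ n, w', ?_⟩
      simp [← hw, pow_succ, add_assoc]
  obtain ⟨n, hn⟩ := hf
  obtain ⟨p, w, hw⟩ := approx n
  exact ⟨p, by simpa [hn] using hw⟩

end CyclicVector

section OrthogonalFittingComponents

variable {R M P : Type*} [CommRing R] [AddCommGroup M] [Module R M] [AddCommGroup P] [Module R P]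

theorem maxGenEigenspace_le_ker [IsArtinian R M] [IsNoetherian R M]
    {B : LinearMap.BilinMap R M P} {f : End R M} (hf : B.IsSelfAdjoint f) {ρ : R}
    (hB : ∀ v ∈ f.maxGenEigenspace ρ, ∀ w ∈ f.maxGenEigenspace ρ, B v w = 0) :
    f.maxGenEigenspace ρ ≤ ker B := by
  intro v hv
  ext w
  have hw : w ∈ (⨆ n : ℕ, ker ((f - ρ • 1) ^ n)) ⊔ ⨅ n : ℕ, range ((f - ρ • 1) ^ n) := by
    simp [(f - ρ • 1).isCompl_iSup_ker_pow_iInf_range_pow.sup_eq_top]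
  obtain ⟨w₀, hw₀, w₁, hw₁, rfl⟩ := Submodule.mem_sup.mp hw
  simp only [← End.genEigenspace_nat, ← End.genEigenspace_top] at hw₀
  obtain ⟨n, hn⟩ := (f.mem_maxGenEigenspace ρ v).mp hv
  obtain ⟨z, rfl⟩ := (Submodule.mem_iInf _).mp hw₁ n
  have haeval : aeval f ((X - C ρ) ^ n) = (f - ρ • 1) ^ n := by
    simp [Algebra.algebraMap_eq_smul_one]
  rw [map_add, hB v hv w₀ hw₀, ← haeval, ← isSelfAdjoint_aeval hf, haeval, hn]
  simp

end OrthogonalFittingComponents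

section GeneralizedEigenspace

variable {K V W : Type*} [Field K] [AddCommGroup V] [Module K V] [FiniteDimensional K V]
  [AddCommGroup W] [Module K W]

theorem exists_isCyclicVector_of_isNilpotent {f : End K V} (hf : IsNilpotent f)
    (hker : finrank K (ker f) ≤ 1) : ∃ u, IsCyclicVector f u := by
  have hcoker : finrank K (V ⧸ range f) ≤ 1 := by
    have := f.finrank_range_add_finrank_ker
    have := (range f).finrank_quotient_add_finrank
    lia
  obtain ⟨u', hu'⟩ := finrank_le_one_iff.mp hcoker
  obtain ⟨u, rfl⟩ := (range f).mkQ_surjective u'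
  refine ⟨u, isCyclicVector_of_isNilpotent hf fun v => ?_⟩
  obtain ⟨c, hc⟩ := hu' ((range f).mkQ v)
  obtain ⟨w, hw⟩ := (Submodule.Quotient.eq _).mp hc.symm
  exact ⟨c, w, by rw [hw]; simp⟩

theorem bilin_comm_of_mem_maxGenEigenspace {B : LinearMap.BilinMap K V W} {f : End K V}
    (hf : B.IsSelfAdjoint f) {ρ : K} (hρ : finrank K (f.eigenspace ρ) ≤ 1) {v w : V}
    (hv : v ∈ f.maxGenEigenspace ρ) (hw : w ∈ f.maxGenEigenspace ρ) : B v w = B w v := by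
  set U := f.maxGenEigenspace ρ
  have hU : ∀ x ∈ U, (f - algebraMap K (End K V) ρ) x ∈ U := fun _ hx =>
    End.mapsTo_maxGenEigenspace_of_comm (Algebra.mul_sub_algebraMap_commutes f ρ) ρ hx
  have hker : finrank K (ker ((f - algebraMap K (End K V) ρ).restrict hU)) ≤ 1 := by
    rw [ker_restrict, Algebra.algebraMap_eq_smul_one, ← End.eigenspace_def]
    exact (Submodule.comapSubtypeEquivOfLe
      End.eigenspace_le_maxGenEigenspace).finrank_eq.trans_le hρ
  obtain ⟨u, hu⟩ := exists_isCyclicVector_of_isNilpotent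
    (f.isNilpotent_restrict_maxGenEigenspace_sub_algebraMap ρ) hker
  have hsub (x y : V) : B ((f - algebraMap K (End K V) ρ) x) y =
      B x ((f - algebraMap K (End K V) ρ) y) := by simp [hf x y]
  exact hu.bilin_comm (B := B.domRestrict₁₂ U U) (fun x y => hsub x y) ⟨v, hv⟩ ⟨w, hw⟩

end GeneralizedEigenspace

section BaseChange

variable {R A M P : Type*} [CommRing R] [CommRing A] [Algebra R A] [AddCommGroup M] [Module R M]
  [AddCommGroup P] [Module R P]

theorem isSelfAdjoint_baseChange {B : LinearMap.BilinMap R M P} {f : End R M}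
    (hf : B.IsSelfAdjoint f) :
    (B.baseChange A).IsSelfAdjoint (f.baseChange A) := by
  rw [LinearMap.IsSelfAdjoint, isAdjointPair_iff_comp_eq_compl₂]
  ext v w
  simp [hf v w]

theorem bilinBaseChange_eq_neg_of_mem_baseChange {B : LinearMap.BilinMap R M P} {S : Submodule R M}
    (hS : ∀ v ∈ S, B v v = 0) {v w : A ⊗[R] M}
    (hv : v ∈ S.baseChange A) (hw : w ∈ S.baseChange A) :
    B.baseChange A v w = -B.baseChange A w v := by
  rw [Submodule.baseChange_eq_span] at hv hw
  induction hv, hw using Submodule.span_induction₂ with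
  | mem_mem x y hx hy =>
    obtain ⟨x, hx, rfl⟩ := hx
    obtain ⟨y, hy, rfl⟩ := hy
    have hxy : B x y = -B y x := by
      have := hS _ (S.add_mem hx hy)
      exact eq_neg_of_add_eq_zero_left (by simpa [hS x hx, hS y hy] using this)
    simp [hxy, TensorProduct.tmul_neg]
  | zero_left => simp
  | zero_right => simp
  | add_left _ _ _ _ _ _ h h' => simp [h, h', add_comm]
  | add_right _ _ _ _ _ _ h h' => simp [h, h', add_comm]
  | smul_left _ _ _ _ _ h => simp [h]
  | smul_right _ _ _ _ _ h => simp [h]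

theorem ker_bilinBaseChange_le [Module.Free R A] (B : LinearMap.BilinMap R M P) :
    ker (B.baseChange A) ≤ (ker B).baseChange A := by
  intro v hv
  let b := Module.Free.chooseBasis R A
  obtain ⟨x, rfl⟩ := TensorProduct.eq_repr_basis_left b v
  refine Submodule.sum_mem _ fun i _ => Submodule.tmul_mem_baseChange_of_mem _ ?_
  ext y
  have hsum : ((x.mapRange (B.flip y) (map_zero _)).sum fun i p => b i ⊗ₜ[R] p) = 0 := by
    have := congr($hv (1 ⊗ₜ y))
    rw [Finsupp.sum_mapRange_index (by simp)]
    simpa [Finsupp.sum] using this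
  exact congr($(TensorProduct.sum_tmul_basis_left_eq_zero b _ hsum) i)

end BaseChange

section FieldExtension

variable {K L V W : Type*} [Field K] [NeZero (2 : K)] [Field L] [Algebra K L]
  [AddCommGroup V] [Module K V] [FiniteDimensional K V] [AddCommGroup W] [Module K W]

theorem maxGenEigenspace_baseChange_le_baseChange_ker {B : LinearMap.BilinMap K V W} {f : End K V}
    (hf : B.IsSelfAdjoint f) {ρ : L} (hρ : finrank L (End.eigenspace (f.baseChange L) ρ) ≤ 1)
    {S : Submodule K V} (hS : ∀ v ∈ S, B v v = 0)
    (hUS : End.maxGenEigenspace (f.baseChange L) ρ ≤ S.baseChange L) :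
    End.maxGenEigenspace (f.baseChange L) ρ ≤ (ker B).baseChange L := by
  have hfL := isSelfAdjoint_baseChange (A := L) hf
  refine (maxGenEigenspace_le_ker hfL fun v hv w hw => ?_).trans (ker_bilinBaseChange_le B)
  have symm := bilin_comm_of_mem_maxGenEigenspace hfL hρ hv hw
  have skew := bilinBaseChange_eq_neg_of_mem_baseChange hS (hUS hv) (hUS hw)
  have two_smul_eq_zero : (2 : K) • B.baseChange L v w = 0 := by
    rw [two_smul]
    nth_rewrite 2 [symm]
    rw [skew, neg_add_cancel]
  exact (smul_eq_zero.mp two_smul_eq_zero).resolve_left two_ne_zero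

theorem stmt_2_general {W' : Type*} [AddCommGroup W'] [Module K W'] {f : End K V}
    {g : LinearMap.BilinMap K V W} (hg : g.SeparatingLeft) (hgf : g.IsSelfAdjoint f)
    {Z : LinearMap.BilinMap K V W'} (hZ : Z.IsAlt) (hZf : Z.IsSelfAdjoint f)
    {ρ : L} (hρ : finrank L (End.eigenspace (f.baseChange L) ρ) = 1) :
    ∃ v, g v v ≠ 0 ∧ Z v = 0 := by
  by_contra! hiso
  have hU : End.maxGenEigenspace (f.baseChange L) ρ ≤ (ker Z).baseChange L :=
    maxGenEigenspace_baseChange_le_baseChange_ker hZf hρ.le (S := ⊤) (fun v _ => hZ v) (by simp)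
  have hU_bot : End.maxGenEigenspace (f.baseChange L) ρ ≤ ⊥ := by
    simpa [separatingLeft_iff_ker_eq_bot.mp hg] using
      maxGenEigenspace_baseChange_le_baseChange_ker hgf hρ.le
        (fun v hv => not_not.mp fun h => hiso v h hv) hU
  have hE : End.eigenspace (f.baseChange L) ρ = ⊥ :=
    eq_bot_iff.mpr (End.eigenspace_le_maxGenEigenspace.trans hU_bot)
  rw [hE, finrank_bot] at hρ
  exact zero_ne_one hρ

end FieldExtension

/-- Corollary 4: for a `g`-self-adjoint endomorphism `a` of a real vector space with
nondegenerate symmetric bilinear form `g`, and a multilinear `Z` skew in its first two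
arguments with `Z(a u, v, ·, ·) + Z(a v, u, ·, ·) = 0`, if the complexification of `a`
has an eigenvalue of geometric multiplicity 1, then the kernel of `Z` contains a
vector `v` with `g(v,v) ≠ 0`. -/
theorem stmt_2 {V : Type*} [AddCommGroup V] [Module ℝ V] [FiniteDimensional ℝ V]
    (hn : 1 ≤ Module.finrank ℝ V)
    (g : V →ₗ[ℝ] V →ₗ[ℝ] ℝ) (hgsymm : ∀ u w, g u w = g w u)
    (hgnd : ∀ v : V, (∀ w, g v w = 0) → v = 0)
    (a : V →ₗ[ℝ] V) (hsa : ∀ u w, g (a u) w = g u (a w))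
    (Z : V →ₗ[ℝ] V →ₗ[ℝ] V →ₗ[ℝ] V →ₗ[ℝ] ℝ)
    (hZskew : ∀ u v x y, Z u v x y = - Z v u x y)
    (hZa : ∀ u v x y, Z (a u) v x y + Z (a v) u x y = 0)
    (ρ : ℂ)
    (hmult : Module.finrank ℂ
      (LinearMap.ker (a.baseChange ℂ - ρ • (LinearMap.id : TensorProduct ℝ ℂ V →ₗ[ℂ] TensorProduct ℝ ℂ V))) = 1) :
    ∃ v : V, g v v ≠ 0 ∧ ∀ x y z, Z v x y z = 0 := by
  have hZalt : Z.IsAlt := fun u => by ext x y; exact self_eq_neg.mp (hZskew u u x y)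
  have hZsa : Z.IsSelfAdjoint a := fun u w => by
    ext x y
    rw [eq_neg_of_add_eq_zero_left (hZa u w x y), ← hZskew]
  have hρ : finrank ℂ (End.eigenspace (a.baseChange ℂ) ρ) = 1 := by
    rw [End.eigenspace_def]
    exact hmult
  obtain ⟨v, hv, hZv⟩ := stmt_2_general (Z := Z)
    (W' := V →ₗ[ℝ] V →ₗ[ℝ] ℝ) hgnd hsa hZalt hZsa hρ
  exact ⟨v, hv, by simp [hZv]⟩
end

section
/- Let k ≥ 0 be a real number and let φ : ℝ → ℝ be three times differentiable and satisfy the ordinary differential equation φ'''(t) = 4k·φ'(t) + 6·φ'(t)·φ''(t) − 4·(φ'(t))³ for all t ∈ ℝ. Define τ : ℝ → ℝ by τ(t) = ∫₀ᵗ exp(2φ(s)) ds. If τ is surjective onto ℝ (equivalently, τ is unbounded above and below), then φ is constant. -/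
/-!
The substitution `p = exp (-2φ)` turns the equation into `p''' = 4k p'` with `p > 0`, and
`τ' = 1 / p`.

If `p'' ≥ c > 0` eventually, then `p` grows quadratically and `τ = ∫ 1 / p` is bounded; if
`p'' ≤ -c < 0` eventually, then `p → -∞`. As `p` is positive and `τ` is onto, `p''` is therefore
not eventually bounded away from `0`, neither at `+∞` nor, by time reversal, at `-∞`.

On the other hand `(p''²)' = 8k p' p''`, and `p' p''` is nondecreasing because
`(p' p'')' = p''² + 4k p'² ≥ 0`. So from any point `a` the function `|p''|` stays above `|p'' a|`
either forward or backward in time, which forces `p'' = 0`. Hence `p` is affine, and being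
positive it is constant.
-/

open Filter Set Real

section Growth

lemma sub_le_sub_of_hasDerivAt_le {f g f' g' : ℝ → ℝ} {a b : ℝ} (hab : a ≤ b)
    (hf : ∀ x ∈ Icc a b, HasDerivAt f (f' x) x) (hg : ∀ x ∈ Icc a b, HasDerivAt g (g' x) x)
    (hle : ∀ x ∈ Icc a b, f' x ≤ g' x) : f b - f a ≤ g b - g a := by
  have hsub : ∀ x ∈ Icc a b, HasDerivAt (fun x => g x - f x) (g' x - f' x) x :=
    fun x hx => (hg x hx).sub (hf x hx)
  have hmono : MonotoneOn (fun x => g x - f x) (Icc a b) :=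
    monotoneOn_of_hasDerivWithinAt_nonneg (convex_Icc a b)
      (fun x hx => (hsub x hx).continuousAt.continuousWithinAt)
      (fun x hx => (hsub x (interior_subset hx)).hasDerivWithinAt)
      (fun x hx => sub_nonneg.2 (hle x (interior_subset hx)))
  linarith [hmono (left_mem_Icc.2 hab) (right_mem_Icc.2 hab) hab]

lemma tendsto_atTop_of_le_hasDerivAt {f f' : ℝ → ℝ} {c : ℝ} (hc : 0 < c)
    (hf : ∀ᶠ t in atTop, HasDerivAt f (f' t) t) (hle : ∀ᶠ t in atTop, c ≤ f' t) :
    Tendsto f atTop atTop := by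
  obtain ⟨a, ha⟩ := eventually_atTop.1 (hf.and hle)
  have hlin : Tendsto (fun t => f a + c * (t - a)) atTop atTop :=
    tendsto_atTop_add_const_left _ _
      ((tendsto_atTop_add_const_right _ (-a) tendsto_id).const_mul_atTop hc)
  refine tendsto_atTop_mono' _ ?_ hlin
  filter_upwards [eventually_ge_atTop a] with t hat
  have := sub_le_sub_of_hasDerivAt_le hat
    (fun x _ => (hasDerivAt_id x).const_mul c) (fun x hx => (ha x hx.1).1)
    (fun x hx => by simpa only [mul_one] using (ha x hx.1).2)
  simp only [id] at this
  linarith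

variable {p p' p'' : ℝ → ℝ} {c : ℝ}

lemma tendsto_atTop_of_le_second_hasDerivAt (hc : 0 < c)
    (hp : ∀ᶠ t in atTop, HasDerivAt p (p' t) t) (hp' : ∀ᶠ t in atTop, HasDerivAt p' (p'' t) t)
    (hle : ∀ᶠ t in atTop, c ≤ p'' t) : Tendsto p atTop atTop :=
  tendsto_atTop_of_le_hasDerivAt one_pos hp
    ((tendsto_atTop_of_le_hasDerivAt hc hp' hle).eventually_ge_atTop 1)

lemma quadratic_le_of_le_second_hasDerivAt {a b : ℝ} (hab : a ≤ b)
    (hp : ∀ x ∈ Icc a b, HasDerivAt p (p' x) x) (hp' : ∀ x ∈ Icc a b, HasDerivAt p' (p'' x) x)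
    (hle : ∀ x ∈ Icc a b, c ≤ p'' x) :
    p a + p' a * (b - a) + c / 2 * (b - a) ^ 2 ≤ p b := by
  have hslope : ∀ x ∈ Icc a b, p' a + c * (x - a) ≤ p' x := by
    intro x hx
    have hsub : Icc a x ⊆ Icc a b := Icc_subset_Icc_right hx.2
    have := sub_le_sub_of_hasDerivAt_le hx.1
      (fun y _ => (hasDerivAt_id y).const_mul c) (fun y hy => hp' y (hsub hy))
      (fun y hy => by simpa only [mul_one] using hle y (hsub hy))
    simp only [id] at this
    linarith
  have hquad : ∀ x, HasDerivAt (fun x => p' a * (x - a) + c / 2 * (x - a) ^ 2)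
      (p' a + c * (x - a)) x := by
    intro x
    have hid := (hasDerivAt_id' x).sub_const a
    refine ((hid.const_mul (p' a)).add ((hid.fun_pow 2).const_mul (c / 2))).congr_deriv ?_
    norm_num
    ring
  have := sub_le_sub_of_hasDerivAt_le hab (fun x _ => hquad x) hp hslope
  simp only [sub_self] at this
  linarith

lemma isBoundedUnder_primitive_inv_of_le_second_hasDerivAt {τ : ℝ → ℝ} (hc : 0 < c)
    (hp : ∀ᶠ t in atTop, HasDerivAt p (p' t) t) (hp' : ∀ᶠ t in atTop, HasDerivAt p' (p'' t) t)
    (hle : ∀ᶠ t in atTop, c ≤ p'' t) (hτ : ∀ᶠ t in atTop, HasDerivAt τ (p t)⁻¹ t) :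
    atTop.IsBoundedUnder (· ≤ ·) τ := by
  have hp_large := (tendsto_atTop_of_le_second_hasDerivAt hc hp hp' hle).eventually_ge_atTop (c / 2)
  have hslope_large := (tendsto_atTop_of_le_hasDerivAt hc hp' hle).eventually_ge_atTop 0
  obtain ⟨a, ha⟩ := eventually_atTop.1 (hp.and (hp'.and (hle.and hτ)))
  obtain ⟨b, hab, hpb, hslope⟩ :=
    ((eventually_ge_atTop a).and (hp_large.and hslope_large)).exists
  have hquad : ∀ t, b ≤ t → c / 2 * (1 + (t - b) ^ 2) ≤ p t := by
    intro t hbt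
    have := quadratic_le_of_le_second_hasDerivAt hbt (fun x hx => (ha x (hab.trans hx.1)).1)
      (fun x hx => (ha x (hab.trans hx.1)).2.1) (fun x hx => (ha x (hab.trans hx.1)).2.2.1)
    linarith [mul_nonneg hslope (sub_nonneg.2 hbt)]
  -- The derivative of this multiple of `arctan (t - b)` is the reciprocal of the bound `hquad`.
  have harctan : ∀ t, HasDerivAt (fun t => 2 / c * arctan (t - b))
      (c / 2 * (1 + (t - b) ^ 2))⁻¹ t := by
    intro t
    refine (((hasDerivAt_id' t).sub_const b).arctan.const_mul (2 / c)).congr_deriv ?_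
    field_simp
  refine isBoundedUnder_of_eventually_le (a := τ b + 2 / c * (π / 2)) ?_
  filter_upwards [eventually_ge_atTop b] with t hbt
  have hcomp := sub_le_sub_of_hasDerivAt_le hbt (fun x hx => (ha x (hab.trans hx.1)).2.2.2)
    (fun x _ => harctan x)
    (fun x hx => inv_anti₀ (by positivity) (hquad x hx.1))
  have hbound : 2 / c * arctan (t - b) ≤ 2 / c * (π / 2) := by
    gcongr
    exact (arctan_lt_pi_div_two _).le
  simp only [sub_self, arctan_zero, mul_zero] at hcomp
  linarith

end Growth

section LinearSystem

variable {κ a : ℝ} {u v : ℝ → ℝ}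

lemma monotone_mul_of_linear_system (hκ : 0 ≤ κ) (hu : ∀ t, HasDerivAt u (v t) t)
    (hv : ∀ t, HasDerivAt v (κ * u t) t) : Monotone (fun t => u t * v t) :=
  monotone_of_hasDerivAt_nonneg (fun t => (hu t).mul (hv t)) fun t => by
    have : 0 ≤ v t ^ 2 + κ * u t ^ 2 := by positivity
    exact this.trans_eq (by ring)

lemma sq_le_sq_of_linear_system (hκ : 0 ≤ κ) (hu : ∀ t, HasDerivAt u (v t) t)
    (hv : ∀ t, HasDerivAt v (κ * u t) t) (ha : 0 ≤ u a * v a) {t : ℝ} (hat : a ≤ t) :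
    v a ^ 2 ≤ v t ^ 2 := by
  have hsq : ∀ x, HasDerivAt (fun x => v x ^ 2) (2 * κ * (u x * v x)) x := fun x =>
    ((hv x).fun_pow 2).congr_deriv (by norm_num; ring)
  have := sub_le_sub_of_hasDerivAt_le hat (fun x _ => hasDerivAt_const x (0 : ℝ))
    (fun x _ => hsq x) fun x hx => mul_nonneg (mul_nonneg zero_le_two hκ)
      (ha.trans (monotone_mul_of_linear_system hκ hu hv hx.1))
  linarith

lemma le_of_linear_system (hκ : 0 ≤ κ) (hu : ∀ t, HasDerivAt u (v t) t)
    (hv : ∀ t, HasDerivAt v (κ * u t) t) (ha : 0 ≤ u a) (hva : 0 < v a) {t : ℝ} (hat : a ≤ t) :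
    v a ≤ v t := by
  have hsq : ∀ {x}, a ≤ x → v a ^ 2 ≤ v x ^ 2 :=
    sq_le_sq_of_linear_system hκ hu hv (mul_nonneg ha hva.le)
  by_contra! hlt
  have hneg : v t ≤ 0 := by
    by_contra! hpos
    exact (pow_lt_pow_left₀ hlt hpos.le two_ne_zero).not_ge (hsq hat)
  obtain ⟨x, hx, hx0⟩ := intermediate_value_Icc' hat
    (fun y _ => (hv y).continuousAt.continuousWithinAt) ⟨hneg, hva.le⟩
  have := hsq hx.1
  rw [hx0] at this
  nlinarith

end LinearSystem

lemma deriv_eq_zero_of_pos_of_second_deriv_eq_zero {p p' : ℝ → ℝ} (hpos : ∀ t, 0 < p t)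
    (hp : ∀ t, HasDerivAt p (p' t) t) (hp' : ∀ t, HasDerivAt p' 0 t) (t : ℝ) : p' t = 0 := by
  have hconst : ∀ x, p' x = p' t := fun x =>
    is_const_of_deriv_eq_zero (fun y => (hp' y).differentiableAt) (fun y => (hp' y).deriv) x t
  have hline : ∀ x, HasDerivAt (fun x => p x - p' t * x) 0 x := fun x =>
    ((hp x).sub ((hasDerivAt_id' x).const_mul (p' t))).congr_deriv (by rw [hconst x]; ring)
  by_contra hne
  have hzero := is_const_of_deriv_eq_zero (fun y => (hline y).differentiableAt)
    (fun y => (hline y).deriv) (-p 0 / p' t) 0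
  simp only [mul_div_cancel₀ _ hne, mul_zero] at hzero
  have hroot_pos := hpos (-p 0 / p' t)
  linarith

/-- A positive solution `p` of `p''' = κ p'` such that the measure `dt / p` is infinite at both
ends of the line, in the sense that its primitive `τ` is onto. The derivatives `p'` and `p''` are
part of the data. For `p = exp (-2φ)` and `κ = 4k` this is the equation of `φ` together with the
completeness of the parameter `τ`. -/
structure IsCompletePositiveSolution (κ : ℝ) (p p' p'' τ : ℝ → ℝ) : Prop where
  pos : ∀ t, 0 < p t
  hasDerivAt : ∀ t, HasDerivAt p (p' t) t
  hasDerivAt_deriv : ∀ t, HasDerivAt p' (p'' t) t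
  hasDerivAt_deriv_deriv : ∀ t, HasDerivAt p'' (κ * p' t) t
  hasDerivAt_param : ∀ t, HasDerivAt τ (p t)⁻¹ t
  surjective_param : Function.Surjective τ

namespace IsCompletePositiveSolution

variable {κ : ℝ} {p p' p'' τ : ℝ → ℝ}

lemma tendsto_param_atTop (h : IsCompletePositiveSolution κ p p' p'' τ) :
    Tendsto τ atTop atTop :=
  (monotone_of_hasDerivAt_nonneg h.hasDerivAt_param
      fun t => (inv_pos.2 (h.pos t)).le).tendsto_atTop_atTop
    fun b => (h.surjective_param b).imp fun _ ht => ht.ge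

lemma reverse (h : IsCompletePositiveSolution κ p p' p'' τ) :
    IsCompletePositiveSolution κ (fun t => p (-t)) (fun t => -p' (-t)) (fun t => p'' (-t))
      (fun t => -τ (-t)) where
  pos t := h.pos (-t)
  hasDerivAt t := ((h.hasDerivAt (-t)).comp t (hasDerivAt_neg t)).congr_deriv (by ring)
  hasDerivAt_deriv t :=
    ((h.hasDerivAt_deriv (-t)).comp t (hasDerivAt_neg t)).fun_neg.congr_deriv (by ring)
  hasDerivAt_deriv_deriv t :=
    ((h.hasDerivAt_deriv_deriv (-t)).comp t (hasDerivAt_neg t)).congr_deriv (by ring)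
  hasDerivAt_param t :=
    ((h.hasDerivAt_param (-t)).comp t (hasDerivAt_neg t)).fun_neg.congr_deriv (by ring)
  surjective_param :=
    neg_surjective.comp (h.surjective_param.comp neg_surjective)

lemma not_eventually_le_second_deriv (h : IsCompletePositiveSolution κ p p' p'' τ) {c : ℝ}
    (hc : 0 < c) : ¬ ∀ᶠ t in atTop, c ≤ p'' t := fun hle =>
  not_isBoundedUnder_of_tendsto_atTop h.tendsto_param_atTop <|
    isBoundedUnder_primitive_inv_of_le_second_hasDerivAt hc (.of_forall h.hasDerivAt)
      (.of_forall h.hasDerivAt_deriv) hle (.of_forall h.hasDerivAt_param)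

lemma not_eventually_second_deriv_le_neg (h : IsCompletePositiveSolution κ p p' p'' τ) {c : ℝ}
    (hc : 0 < c) : ¬ ∀ᶠ t in atTop, c ≤ -p'' t := by
  intro hle
  have hlim : Tendsto (fun t => -p t) atTop atTop :=
    tendsto_atTop_of_le_second_hasDerivAt hc (.of_forall fun t => (h.hasDerivAt t).fun_neg)
      (.of_forall fun t => (h.hasDerivAt_deriv t).fun_neg) hle
  obtain ⟨t, ht⟩ := (hlim.eventually_ge_atTop 0).exists
  linarith [h.pos t]

lemma second_deriv_eq_zero_of_mul_nonneg (h : IsCompletePositiveSolution κ p p' p'' τ)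
    (hκ : 0 ≤ κ) {a : ℝ} (ha : 0 ≤ p' a * p'' a) : p'' a = 0 := by
  rcases lt_trichotomy (p'' a) 0 with hneg | hzero | hpos
  · have hslope : 0 ≤ -p' a := neg_nonneg.2 (nonpos_of_mul_nonneg_left ha hneg)
    refine absurd ?_ (h.not_eventually_second_deriv_le_neg (neg_pos.2 hneg))
    filter_upwards [eventually_ge_atTop a] with t hat
    exact le_of_linear_system hκ (fun t => (h.hasDerivAt_deriv t).fun_neg)
      (fun t => (h.hasDerivAt_deriv_deriv t).fun_neg.congr_deriv (by ring))
      hslope (neg_pos.2 hneg) hat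
  · exact hzero
  · have hslope : 0 ≤ p' a := nonneg_of_mul_nonneg_left ha hpos
    refine absurd ?_ (h.not_eventually_le_second_deriv hpos)
    filter_upwards [eventually_ge_atTop a] with t hat
    exact le_of_linear_system hκ h.hasDerivAt_deriv h.hasDerivAt_deriv_deriv hslope hpos hat

lemma second_deriv_eq_zero (h : IsCompletePositiveSolution κ p p' p'' τ) (hκ : 0 ≤ κ) (t : ℝ) :
    p'' t = 0 := by
  rcases le_total 0 (p' t * p'' t) with hnonneg | hnonpos
  · exact h.second_deriv_eq_zero_of_mul_nonneg hκ hnonneg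
  · simpa only [neg_neg] using h.reverse.second_deriv_eq_zero_of_mul_nonneg hκ (a := -t)
      (by simpa only [neg_neg, neg_mul, neg_nonneg] using hnonpos)

theorem deriv_eq_zero (h : IsCompletePositiveSolution κ p p' p'' τ) (hκ : 0 ≤ κ) (t : ℝ) :
    p' t = 0 :=
  deriv_eq_zero_of_pos_of_second_deriv_eq_zero h.pos h.hasDerivAt
    (fun x => h.second_deriv_eq_zero hκ x ▸ h.hasDerivAt_deriv x) t

end IsCompletePositiveSolution

section ExpMul

variable {φ φ' φ'' : ℝ → ℝ} {y t : ℝ} (c : ℝ)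

lemma hasDerivAt_exp_const_mul (hφ : HasDerivAt φ y t) :
    HasDerivAt (fun t => exp (c * φ t)) (c * y * exp (c * φ t)) t :=
  (hφ.const_mul c).exp.congr_deriv (by ring)

lemma hasDerivAt_deriv_exp_const_mul (hφ : HasDerivAt φ (φ' t) t)
    (hφ' : HasDerivAt φ' y t) :
    HasDerivAt (fun t => c * φ' t * exp (c * φ t))
      ((c * y + c ^ 2 * φ' t ^ 2) * exp (c * φ t)) t :=
  ((hφ'.const_mul c).mul (hasDerivAt_exp_const_mul c hφ)).congr_deriv (by ring)

lemma hasDerivAt_deriv_deriv_exp_const_mul (hφ : HasDerivAt φ (φ' t) t)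
    (hφ' : HasDerivAt φ' (φ'' t) t) (hφ'' : HasDerivAt φ'' y t) :
    HasDerivAt (fun t => (c * φ'' t + c ^ 2 * φ' t ^ 2) * exp (c * φ t))
      ((c * y + 3 * c ^ 2 * φ' t * φ'' t + c ^ 3 * φ' t ^ 3) * exp (c * φ t)) t :=
  (((hφ''.const_mul c).add ((hφ'.fun_pow 2).const_mul (c ^ 2))).mul
    (hasDerivAt_exp_const_mul c hφ)).congr_deriv (by norm_num; ring)

end ExpMul

/-- Analytic core of Theorem 1: if `φ` solves `φ''' = 4k φ' + 6 φ' φ'' − 4 (φ')³`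
with `k ≥ 0`, and the reparametrization `τ(t) = ∫₀ᵗ e^{2φ}` is onto `ℝ`,
then `φ` is constant. -/
theorem stmt_7 (k : ℝ) (hk : 0 ≤ k) (φ : ℝ → ℝ)
    (h1 : Differentiable ℝ φ) (h2 : Differentiable ℝ (deriv φ))
    (h3 : Differentiable ℝ (deriv (deriv φ)))
    (hode : ∀ t, deriv (deriv (deriv φ)) t =
      4 * k * deriv φ t + 6 * deriv φ t * deriv (deriv φ) t - 4 * (deriv φ t) ^ 3)
    (τ : ℝ → ℝ) (hτ : ∀ t, τ t = ∫ s in (0:ℝ)..t, Real.exp (2 * φ s))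
    (hsurj : Function.Surjective τ) :
    ∀ s t, φ s = φ t := by
  have hτ' : ∀ t, HasDerivAt τ (exp (-2 * φ t))⁻¹ t := fun t => by
    have hcont : Continuous fun s => exp (2 * φ s) := (h1.continuous.const_mul 2).rexp
    rw [funext hτ, ← exp_neg, neg_mul, neg_neg]
    exact (hcont.integral_hasStrictDerivAt 0 t).hasDerivAt
  have hsol : IsCompletePositiveSolution (4 * k) _ _ _ τ :=
    { pos := fun t => exp_pos (-2 * φ t)
      hasDerivAt := fun t => hasDerivAt_exp_const_mul (-2) (h1 t).hasDerivAt
      hasDerivAt_deriv := fun t =>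
        hasDerivAt_deriv_exp_const_mul (-2) (h1 t).hasDerivAt (h2 t).hasDerivAt
      hasDerivAt_deriv_deriv := fun t =>
        (hasDerivAt_deriv_deriv_exp_const_mul (-2) (h1 t).hasDerivAt (h2 t).hasDerivAt
          (h3 t).hasDerivAt).congr_deriv (by rw [hode t]; ring)
      hasDerivAt_param := hτ'
      surjective_param := hsurj }
  refine is_const_of_deriv_eq_zero h1 fun t => ?_
  simpa [exp_ne_zero] using hsol.deriv_eq_zero (by positivity) t
end

section
/- Let c > 0 and let C, C₊, C₋ be real numbers such that p(t) := C + C₊·exp(c·t) + C₋·exp(−c·t) is strictly positive for every t ∈ ℝ. Define τ : ℝ → ℝ by τ(t) = ∫₀ᵗ 1/p(s) ds. If τ is surjective onto ℝ (equivalently, unbounded above and below), then C₊ = 0 and C₋ = 0, i.e. p is the constant C > 0. -/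
/-!
If `C₊ ≠ 0`, then `p(t) ~ C₊ e^{ct}` as `t → ∞`, so `1/p = O(e^{-ct})` is integrable at `+∞` and
`τ` is bounded above, which surjectivity excludes. The reflection `t ↦ -t` swaps `C₊` with `C₋`
and replaces `τ(t)` by `-τ(-t)`, so the same argument at `-∞` gives `C₋ = 0`.
-/

open MeasureTheory Filter Asymptotics Set

lemma bddAbove_range_intervalIntegral_of_integrableOn_Ioi {μ : Measure ℝ} {f : ℝ → ℝ} {a : ℝ}
    (hf : 0 ≤ᵐ[μ] f) (hint : IntegrableOn f (Ioi a) μ) :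
    BddAbove (range fun t ↦ ∫ s in a..t, f s ∂μ) := by
  refine ⟨∫ s in Ioi a, f s ∂μ, forall_mem_range.2 fun t ↦ ?_⟩
  rcases le_total a t with hat | hta
  · rw [intervalIntegral.integral_of_le hat]
    exact setIntegral_mono_set hint (ae_restrict_of_ae hf) Ioc_subset_Ioi_self.eventuallyLE
  · calc ∫ s in a..t, f s ∂μ = -∫ s in t..a, f s ∂μ := intervalIntegral.integral_symm t a
      _ ≤ 0 := neg_nonpos.2 (intervalIntegral.integral_nonneg_of_ae hta hf)
      _ ≤ ∫ s in Ioi a, f s ∂μ := integral_nonneg_of_ae (ae_restrict_of_ae hf)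

/-- The function `p(t) = C + C₊ e^{ct} + C₋ e^{-ct}`, with `Cp` and `Cm` standing for `C₊` and
`C₋`: the reciprocal of the derivative of the reparametrization `τ`. -/
noncomputable def expTrinomial (c C Cp Cm t : ℝ) : ℝ :=
  C + Cp * Real.exp (c * t) + Cm * Real.exp (-c * t)

namespace expTrinomial

variable {c C Cp Cm a : ℝ}

@[fun_prop]
lemma continuous : Continuous (expTrinomial c C Cp Cm) := by
  unfold expTrinomial
  fun_prop

lemma apply_neg (t : ℝ) : expTrinomial c C Cp Cm (-t) = expTrinomial c C Cm Cp t := by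
  simp only [expTrinomial, mul_neg, neg_mul, neg_neg]
  ring

lemma isEquivalent_atTop (hc : 0 < c) (hCp : Cp ≠ 0) :
    expTrinomial c C Cp Cm ~[atTop] fun t ↦ Cp * Real.exp (c * t) := by
  have hgrow : Tendsto (fun t ↦ Real.exp (c * t)) atTop atTop :=
    Real.tendsto_exp_atTop.comp (tendsto_id.const_mul_atTop hc)
  have hconst : (fun _ ↦ C) =o[atTop] fun t ↦ Cp * Real.exp (c * t) :=
    (isLittleO_const_left.2 <| .inr <| tendsto_norm_atTop_atTop.comp hgrow).const_mul_right hCp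
  have hdecay : (fun t ↦ Cm * Real.exp (-c * t)) =o[atTop] fun t ↦ Cp * Real.exp (c * t) := by
    refine (IsLittleO.const_mul_left ?_ Cm).const_mul_right hCp
    rw [Real.isLittleO_exp_comp_exp_comp]
    convert tendsto_id.const_mul_atTop (show 0 < 2 * c by positivity) using 2 with t
    simp only [id]
    ring
  refine (IsEquivalent.refl.add_isLittleO (hconst.add hdecay)).congr_left (.of_forall fun t ↦ ?_)
  simp only [Pi.add_apply, expTrinomial]
  ring

lemma one_div_isBigO_exp_neg (hc : 0 < c) (hCp : Cp ≠ 0) :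
    (fun t ↦ 1 / expTrinomial c C Cp Cm t) =O[atTop] fun t ↦ Real.exp (-c * t) := by
  have hinv : (fun t ↦ 1 / expTrinomial c C Cp Cm t) ~[atTop] fun t ↦
      Cp⁻¹ * Real.exp (-c * t) := by
    simpa [Pi.inv_def, mul_comm, Real.exp_neg] using (isEquivalent_atTop hc hCp).inv
  exact hinv.isBigO.trans (isBigO_const_mul_self _ _ _)

lemma integrableOn_Ioi_one_div (hc : 0 < c) (hCp : Cp ≠ 0)
    (hp : ∀ t ∈ Ici a, expTrinomial c C Cp Cm t ≠ 0) :
    IntegrableOn (fun t ↦ 1 / expTrinomial c C Cp Cm t) (Ioi a) :=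
  integrable_of_isBigO_exp_neg hc (continuousOn_const.div continuous.continuousOn hp)
    (one_div_isBigO_exp_neg hc hCp)

lemma coeff_eq_zero_of_not_bddAbove (hc : 0 < c) (hpos : ∀ t, 0 < expTrinomial c C Cp Cm t)
    (hτ : ¬ BddAbove (range fun t ↦ ∫ s in a..t, 1 / expTrinomial c C Cp Cm s)) : Cp = 0 := by
  contrapose! hτ with hCp
  exact bddAbove_range_intervalIntegral_of_integrableOn_Ioi
    (.of_forall fun t ↦ one_div_nonneg.2 (hpos t).le)
    (integrableOn_Ioi_one_div hc hCp fun t _ ↦ (hpos t).ne')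

lemma integral_one_div_swap (t : ℝ) :
    ∫ s in -a..t, 1 / expTrinomial c C Cm Cp s =
      -∫ s in a..-t, 1 / expTrinomial c C Cp Cm s := by
  simp_rw [← apply_neg (Cp := Cp)]
  rw [intervalIntegral.integral_comp_neg fun s ↦ 1 / expTrinomial c C Cp Cm s, neg_neg,
    intervalIntegral.integral_symm]

lemma coeff_eq_zero_of_not_bddBelow (hc : 0 < c) (hpos : ∀ t, 0 < expTrinomial c C Cp Cm t)
    (hτ : ¬ BddBelow (range fun t ↦ ∫ s in a..t, 1 / expTrinomial c C Cp Cm s)) : Cm = 0 := by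
  refine coeff_eq_zero_of_not_bddAbove (Cm := Cp) (a := -a) hc
    (fun t ↦ apply_neg t ▸ hpos (-t)) fun ⟨M, hM⟩ ↦ hτ ⟨-M, forall_mem_range.2 fun t ↦ ?_⟩
  have hreflected := forall_mem_range.1 hM (-t)
  rw [integral_one_div_swap, neg_neg] at hreflected
  exact neg_le.1 hreflected

end expTrinomial

/-- Case `K·g(γ̇,γ̇) > 0` of the completeness argument: if
`p(t) = C + C₊ e^{ct} + C₋ e^{−ct}` is everywhere positive and `τ(t) = ∫₀ᵗ 1/p` is
onto `ℝ`, then the exponential terms vanish. -/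
theorem stmt_11 (c : ℝ) (hc : 0 < c) (C Cp Cm : ℝ)
    (hpos : ∀ t : ℝ, 0 < C + Cp * Real.exp (c * t) + Cm * Real.exp (-c * t))
    (τ : ℝ → ℝ)
    (hτ : ∀ t, τ t = ∫ s in (0:ℝ)..t,
      1 / (C + Cp * Real.exp (c * s) + Cm * Real.exp (-c * s)))
    (hsurj : Function.Surjective τ) :
    Cp = 0 ∧ Cm = 0 := by
  have hrange : range (fun t ↦ ∫ s in (0 : ℝ)..t, 1 / expTrinomial c C Cp Cm s) = univ :=
    (congrArg range (funext hτ)).symm.trans hsurj.range_eq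
  constructor
  · exact expTrinomial.coeff_eq_zero_of_not_bddAbove hc hpos (hrange ▸ not_bddAbove_univ)
  · exact expTrinomial.coeff_eq_zero_of_not_bddBelow hc hpos (hrange ▸ not_bddBelow_univ)
end
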